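/- Let N be a nilpotent endomorphism of a finite-dimensional complex vector space V. Then there exists a unique increasing filtration (W_k)_{k∈ℤ} of V by subspaces (with W_k = 0 for k ≪ 0 and W_k = V for k ≫ 0) such that N(W_k) ⊆ W_{k-2} for all k, and such that for every k ≥ 0 the induced map N^k : Gr^W_k → Gr^W_{-k} between the graded quotients Gr^W_k = W_k / W_{k-1} is an isomorphism. -/

import Mathlib

/-- `W` is a weight filtration for `N`: an increasing filtration, trivial for `k ≪ 0`,
full for `k ≫ 0`, with `N (W_k) ⊆ W_{k-2}`, such that for each `k ≥ 0` the map induced by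
`N^k` on graded quotients `Gr^W_k = W_k / W_{k-1} → Gr^W_{-k} = W_{-k} / W_{-k-1}` is an
isomorphism (injectivity and surjectivity of the induced map are spelled out
elementwise). -/
def IsWeightFiltration {V : Type*} [AddCommGroup V] [Module ℂ V]
    (N : Module.End ℂ V) (W : ℤ → Submodule ℂ V) : Prop :=
  Monotone W ∧
  (∃ k₀ : ℤ, ∀ k ≤ k₀, W k = ⊥) ∧
  (∃ k₁ : ℤ, ∀ k ≥ k₁, W k = ⊤) ∧
  (∀ k : ℤ, ∀ x ∈ W k, N x ∈ W (k - 2)) ∧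
  (∀ k : ℕ,
    (∀ x ∈ W (k : ℤ), (N ^ k) x ∈ W (-(k : ℤ) - 1) → x ∈ W ((k : ℤ) - 1)) ∧
    (∀ y ∈ W (-(k : ℤ)), ∃ x ∈ W (k : ℤ), y - (N ^ k) x ∈ W (-(k : ℤ) - 1)))

namespace Module.End

variable {R M : Type*} [Ring R] [AddCommGroup M] [Module R M]

/-- The weight filtration of an endomorphism, given explicitly by
`W_k = ∑_j N^j (ker N^(2j+k+1))`, where a negative exponent is read as `0`. -/
def weightFiltration (N : Module.End R M) (k : ℤ) : Submodule R M :=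
  ⨆ j : ℕ, (LinearMap.ker (N ^ (2 * j + k + 1 : ℤ).toNat)).map (N ^ j)

variable {N : Module.End R M}

theorem pow_apply_eq_zero_of_le {m n : ℕ} (h : m ≤ n) {x : M} (hx : (N ^ m) x = 0) :
    (N ^ n) x = 0 := by
  rw [← Nat.sub_add_cancel h, pow_add, mul_apply, hx, map_zero]

theorem weightFiltration_le_iff {k : ℤ} {P : Submodule R M} :
    weightFiltration N k ≤ P ↔
      ∀ (j : ℕ) (x : M), (N ^ (2 * j + k + 1 : ℤ).toNat) x = 0 → (N ^ j) x ∈ P := by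
  simp only [weightFiltration, iSup_le_iff, Submodule.map_le_iff_le_comap]
  rfl

theorem pow_apply_mem_weightFiltration {k : ℤ} {j m : ℕ} (h : (m : ℤ) ≤ 2 * j + k + 1) {x : M}
    (hx : (N ^ m) x = 0) : (N ^ j) x ∈ weightFiltration N k :=
  weightFiltration_le_iff.1 le_rfl j x (pow_apply_eq_zero_of_le (by omega) hx)

theorem mem_weightFiltration_of_pow_apply_eq_zero {k : ℤ} {m : ℕ} (h : (m : ℤ) ≤ k + 1) {x : M}
    (hx : (N ^ m) x = 0) : x ∈ weightFiltration N k := by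
  simpa using pow_apply_mem_weightFiltration (j := 0) (by simpa using h) hx

theorem weightFiltration_mono : Monotone (weightFiltration N) := fun k l h ↦
  weightFiltration_le_iff.2 fun j x hx ↦
    weightFiltration_le_iff.1 le_rfl j x (pow_apply_eq_zero_of_le (by omega) hx)

theorem apply_mem_weightFiltration {k : ℤ} {x : M} (hx : x ∈ weightFiltration N k) :
    N x ∈ weightFiltration N (k - 2) := by
  refine weightFiltration_le_iff (P := (weightFiltration N (k - 2)).comap N).2 (fun j y hy ↦ ?_) hx
  rw [Submodule.mem_comap, ← mul_apply, ← pow_succ']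
  refine weightFiltration_le_iff.1 le_rfl (j + 1) y ?_
  convert hy using 4
  push_cast
  ring

theorem exists_pow_apply_eq_of_mem_weightFiltration_neg {k : ℕ} {y : M}
    (hy : y ∈ weightFiltration N (-k)) : ∃ x ∈ weightFiltration N k, (N ^ k) x = y := by
  refine weightFiltration_le_iff (P := (weightFiltration N k).map (N ^ k)).2 (fun j x hx ↦ ?_) hy
  obtain h | h := le_or_gt k j
  · refine ⟨(N ^ (j - k)) x, weightFiltration_le_iff.1 le_rfl _ _ ?_, ?_⟩
    · exact pow_apply_eq_zero_of_le (by omega) hx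
    · rw [← mul_apply, ← pow_add, Nat.add_sub_cancel' h]
  · rw [pow_apply_eq_zero_of_le (by omega) hx]
    exact zero_mem _

end Module.End

open Module.End

theorem isWeightFiltration_weightFiltration {V : Type*} [AddCommGroup V] [Module ℂ V]
    {N : Module.End ℂ V} (hN : IsNilpotent N) : IsWeightFiltration N (weightFiltration N) := by
  obtain ⟨n, hn⟩ := hN
  have hzero (x : V) : (N ^ n) x = 0 := by simp [hn]
  refine ⟨weightFiltration_mono, ⟨-2 * n, fun k hk ↦ ?_⟩, ⟨n, fun k hk ↦ ?_⟩,
    fun _ _ ↦ apply_mem_weightFiltration, fun k ↦ ⟨fun x _ hx ↦ ?_, fun y hy ↦ ?_⟩⟩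
  · refine eq_bot_iff.2 (weightFiltration_le_iff.2 fun j x hx ↦ ?_)
    rw [Submodule.mem_bot]
    obtain h | h := le_or_gt n j
    · exact pow_apply_eq_zero_of_le h (hzero x)
    · exact pow_apply_eq_zero_of_le (by omega) hx
  · exact eq_top_iff.2 fun x _ ↦ mem_weightFiltration_of_pow_apply_eq_zero (by omega) (hzero x)
  · have hx' : (N ^ k) x ∈ weightFiltration N (-(k + 1 : ℕ)) := by
      convert hx using 2
      push_cast
      ring
    obtain ⟨z, hz, hzx⟩ := exists_pow_apply_eq_of_mem_weightFiltration_neg hx'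
    have hNz : N z ∈ weightFiltration N (k - 1) := by
      convert apply_mem_weightFiltration hz using 2
      push_cast
      ring
    have hker : (N ^ k) (x - N z) = 0 := by
      rw [map_sub, ← hzx, pow_succ, mul_apply, sub_self]
    simpa using add_mem (mem_weightFiltration_of_pow_apply_eq_zero (by omega) hker) hNz
  · obtain ⟨x, hx, rfl⟩ := exists_pow_apply_eq_of_mem_weightFiltration_neg hy
    exact ⟨x, hx, by simp⟩

namespace IsWeightFiltration

variable {V : Type*} [AddCommGroup V] [Module ℂ V] {N : Module.End ℂ V} {W : ℤ → Submodule ℂ V}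

theorem pow_apply_mem (hW : IsWeightFiltration N W) {k : ℤ} (j : ℕ) {x : V} (hx : x ∈ W k) :
    (N ^ j) x ∈ W (k - 2 * j) := by
  induction j with
  | zero => simpa using hx
  | succ j ih =>
    rw [pow_succ', mul_apply]
    convert hW.2.2.2.1 _ _ ih using 2
    push_cast
    ring

theorem mem_of_pow_apply_eq_zero (hW : IsWeightFiltration N W) {m : ℕ} {k : ℤ}
    (h : (m : ℤ) ≤ k + 1) {x : V} (hx : (N ^ m) x = 0) : x ∈ W k := by
  obtain ⟨-, -, ⟨k₁, hk₁⟩, -, hgr⟩ := hW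
  have hlarge : x ∈ W (max k k₁) := by simp [hk₁ _ (le_max_right k k₁)]
  refine Int.leInductionDown (m := max k k₁) (motive := fun l _ ↦ k ≤ l → x ∈ W l)
    (fun _ ↦ hlarge) (fun l _ ih hl ↦ ?_) k (le_max_left _ _) le_rfl
  lift l to ℕ using by omega
  refine (hgr l).1 x (ih (by omega)) ?_
  rw [pow_apply_eq_zero_of_le (by omega) hx]
  exact zero_mem _

theorem exists_pow_apply_eq (hW : IsWeightFiltration N W) (k : ℕ) {y : V} (hy : y ∈ W (-k)) :
    ∃ x ∈ W k, (N ^ k) x = y := by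
  obtain ⟨hmono, ⟨k₀, hk₀⟩, -, hN, hgr⟩ := hW
  obtain ⟨d, hd⟩ : ∃ d : ℕ, -k - d ≤ k₀ := ⟨(-k - k₀).toNat, by omega⟩
  induction d generalizing k y with
  | zero =>
    rw [hk₀ _ (by simpa using hd), Submodule.mem_bot] at hy
    exact ⟨0, zero_mem _, by simp [hy]⟩
  | succ d ih =>
    obtain ⟨x, hx, hr⟩ := (hgr k).2 y hy
    obtain ⟨z, hz, hzr⟩ := ih (k + 1) (hmono (by omega) hr) (by push_cast at hd ⊢; omega)
    refine ⟨x + N z, add_mem hx (hmono (by omega) (hN _ z hz)), ?_⟩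
    rw [map_add, ← mul_apply, ← pow_succ, hzr, add_sub_cancel]

theorem weightFiltration_le (hW : IsWeightFiltration N W) (k : ℤ) : weightFiltration N k ≤ W k := by
  refine weightFiltration_le_iff.2 fun j x hx ↦ ?_
  obtain h | h := le_or_gt 0 (2 * j + k + 1)
  · have := hW.pow_apply_mem j (hW.mem_of_pow_apply_eq_zero (k := 2 * j + k) (by omega) hx)
    simpa using this
  · rw [Int.toNat_of_nonpos h.le, pow_zero, one_apply] at hx
    simp [hx]

theorem le_weightFiltration_natCast (hW : IsWeightFiltration N W) (hN : IsNilpotent N) (k : ℕ) :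
    W k ≤ weightFiltration N k := by
  intro y hy
  obtain ⟨n, hn⟩ := hN
  obtain ⟨d, hd⟩ : ∃ d : ℕ, n ≤ k + d := ⟨n, by omega⟩
  induction d generalizing k y with
  | zero =>
    exact mem_weightFiltration_of_pow_apply_eq_zero (m := n) (by omega) (by simp [hn])
  | succ d ih =>
    have hy' : (N ^ (k + 1)) y ∈ W (-(k + 2 : ℕ)) := by
      convert hW.pow_apply_mem (k + 1) hy using 2
      push_cast
      ring
    obtain ⟨z, hz, hzy⟩ := hW.exists_pow_apply_eq (k + 2) hy'
    have hNz : N z ∈ weightFiltration N k := by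
      convert apply_mem_weightFiltration (ih (k + 2) hz (by omega)) using 2
      push_cast
      ring
    have hker : (N ^ (k + 1)) (y - N z) = 0 := by
      rw [map_sub, ← hzy, pow_succ _ (k + 1), mul_apply, sub_self]
    simpa using add_mem (mem_weightFiltration_of_pow_apply_eq_zero (by omega) hker) hNz

theorem eq_weightFiltration (hW : IsWeightFiltration N W) (hN : IsNilpotent N) :
    W = weightFiltration N := by
  refine funext fun k ↦ (hW.weightFiltration_le k).antisymm' ?_
  obtain ⟨l, rfl | rfl⟩ := Int.eq_nat_or_neg k
  · exact hW.le_weightFiltration_natCast hN l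
  · intro y hy
    obtain ⟨x, hx, rfl⟩ := hW.exists_pow_apply_eq l hy
    have := (isWeightFiltration_weightFiltration hN).pow_apply_mem l
      (hW.le_weightFiltration_natCast hN l hx)
    convert this using 2
    ring

end IsWeightFiltration

/-- Every nilpotent endomorphism of a finite-dimensional complex vector space admits a
unique weight filtration. -/
theorem stmt3 {V : Type*} [AddCommGroup V] [Module ℂ V] [FiniteDimensional ℂ V]
    (N : Module.End ℂ V) (hN : IsNilpotent N) :
    ∃! W : ℤ → Submodule ℂ V, IsWeightFiltration N W := by
  exact ⟨weightFiltration N, isWeightFiltration_weightFiltration hN,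
    fun _ hW ↦ hW.eq_weightFiltration hN⟩
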